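/- Let Ω⁺ ⊂ ℝ² be a Jordan domain, Ω⁻ = ℝ² \ closure(Ω⁺), and Γ = ∂Ω⁺ = ∂Ω⁻. Fix α ∈ (0,1) and C₀ > 0, and suppose there exists r₀ > 0 such that ε(x,r) ≤ C₀·r^α for all x ∈ Γ and all 0 < r ≤ r₀. Let x₀ ∈ Γ and 0 < s₀ ≤ r₀ with s₀ < (π/(6C₀))^{1/α}, and let y ∈ ∂B(x₀,s₀) ∩ Γ. Then the two intersection points a and b of the circles ∂B(x₀,s₀) and ∂B(y,s₀) do not lie on Γ (so each lies in Ω⁺ or in Ω⁻). -/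

import Mathlib

open Set Metric MeasureTheory

noncomputable section

abbrev E2 := EuclideanSpace ℝ (Fin 2)

/-- The point on the circle of center `x` and radius `r` at angle `t`. -/
def circlePt (x : E2) (r t : ℝ) : E2 :=
  x + r • (EuclideanSpace.equiv (Fin 2) ℝ).symm ![Real.cos t, Real.sin t]

/-- `A` is an open arc of the circle `∂B(x,r)`. -/
def IsOpenArc (x : E2) (r : ℝ) (A : Set E2) : Prop :=
  ∃ a b : ℝ, a < b ∧ b - a ≤ 2 * Real.pi ∧ A = circlePt x r '' Set.Ioo a b

/-- The `H¹`-measure of the largest open arc of `∂B(x,r)` contained in `Ω`. -/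
def maxArcMeasure (Ω : Set E2) (x : E2) (r : ℝ) : ℝ :=
  (⨆ A ∈ {A | IsOpenArc x r A ∧ A ⊆ Ω}, μH[1] A).toReal

/-- The Carleson ε-function of the Jordan domain `Ω⁺`, where `Ω⁻ = ℝ² \ closure Ω⁺`. -/
def carlesonEps (Ω : Set E2) (x : E2) (r : ℝ) : ℝ :=
  (1 / r) * max |Real.pi * r - maxArcMeasure Ω x r|
      |Real.pi * r - maxArcMeasure ((closure Ω)ᶜ) x r|

/-- `Γ` is a Jordan curve: the image of a continuous injective map of the unit circle. -/
def IsJordanCurve (Γ : Set E2) : Prop :=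
  ∃ f : Metric.sphere (0 : ℝ × ℝ) 1 → E2,
    Continuous f ∧ Function.Injective f ∧ Set.range f = Γ

/-- A Jordan domain: an open connected set whose boundary is a Jordan curve. -/
def IsJordanDomain (Ω : Set E2) : Prop :=
  IsOpen Ω ∧ IsConnected Ω ∧ IsJordanCurve (frontier Ω)

/-- An affine line in the plane. -/
def IsAffineLine (L : Set E2) : Prop :=
  ∃ p v : E2, v ≠ 0 ∧ L = {y | ∃ t : ℝ, y = p + t • v}

/-- The (smaller) angle between the lines spanned by `u` and `v`, an element of `[0, π/2]`. -/
def lineAngle (u v : E2) : ℝ :=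
  min (InnerProductGeometry.angle u v) (Real.pi - InnerProductGeometry.angle u v)


theorem aux_circlePt_zero (x : E2) (r t : ℝ) : circlePt x r t 0 = x 0 + r * Real.cos t := by
  simp [circlePt]

theorem aux_circlePt_one (x : E2) (r t : ℝ) : circlePt x r t 1 = x 1 + r * Real.sin t := by
  simp [circlePt]

theorem aux_circlePt_periodic (x : E2) (r t : ℝ) (k : ℤ) :
    circlePt x r (t + k * (2 * Real.pi)) = circlePt x r t := by
  simp [circlePt, Real.cos_add_int_mul_two_pi, Real.sin_add_int_mul_two_pi]

theorem aux_dist_sq (p q : E2) : dist p q ^ 2 = (p 0 - q 0) ^ 2 + (p 1 - q 1) ^ 2 := by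
  rw [EuclideanSpace.dist_eq, Real.sq_sqrt (by positivity)]
  simp [Fin.sum_univ_two, Real.dist_eq, sq_abs]

theorem aux_param (x p : E2) (r : ℝ) (hr : 0 < r) (hp : dist p x = r) :
    ∃ t, p = circlePt x r t := by
  have h := aux_dist_sq p x
  rw [hp] at h
  let z : ℂ := ⟨p 0 - x 0, p 1 - x 1⟩
  have hz : ‖z‖ = r := by
    have h1 : ‖z‖ ^ 2 = r ^ 2 := by
      rw [Complex.sq_norm, Complex.normSq_apply, h]
      simp only [z]; ring
    exact (sq_eq_sq₀ (norm_nonneg z) hr.le).1 h1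
  refine ⟨z.arg, ?_⟩
  have h0 : r * Real.cos z.arg = p 0 - x 0 := by
    rw [← hz]; exact Complex.norm_mul_cos_arg z
  have h1 : r * Real.sin z.arg = p 1 - x 1 := by
    rw [← hz]; exact Complex.norm_mul_sin_arg z
  ext i
  fin_cases i
  · show p 0 = circlePt x r z.arg 0
    rw [aux_circlePt_zero, h0]; ring
  · show p 1 = circlePt x r z.arg 1
    rw [aux_circlePt_one, h1]; ring

theorem aux_lipschitz (x : E2) (r : ℝ) (hr : 0 < r) :
    LipschitzWith r.toNNReal (circlePt x r) := by
  refine LipschitzWith.of_dist_le_mul fun s t => ?_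
  rw [Real.coe_toNNReal _ hr.le]
  refine abs_le_of_sq_le_sq' ?_ (by positivity) |>.2
  rw [aux_dist_sq, aux_circlePt_zero, aux_circlePt_zero, aux_circlePt_one, aux_circlePt_one,
    mul_pow, Real.dist_eq, sq_abs]
  have h1 := Real.one_sub_sq_div_two_le_cos (x := s - t)
  rw [Real.cos_sub] at h1
  have hs := Real.sin_sq_add_cos_sq s
  have ht := Real.sin_sq_add_cos_sq t
  have : (Real.cos s - Real.cos t) ^ 2 + (Real.sin s - Real.sin t) ^ 2 ≤ (s - t) ^ 2 := by
    nlinarith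
  have := mul_le_mul_of_nonneg_left this (sq_nonneg r)
  nlinarith

theorem aux_arc_measure (x : E2) (r : ℝ) (hr : 0 < r) (c d : ℝ) :
    μH[1] (circlePt x r '' Set.Ioo c d) ≤ ENNReal.ofReal (r * (d - c)) := by
  have h := (aux_lipschitz x r hr).hausdorffMeasure_image_le (d := 1) zero_le_one (Set.Ioo c d)
  rw [MeasureTheory.hausdorffMeasure_real, Real.volume_Ioo] at h
  rw [ENNReal.ofReal_mul hr.le]
  simpa [ENNReal.ofReal] using h

theorem aux_mem (Ω : Set E2) (x : E2) (r θ : ℝ) (hr : 0 < r)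
    (h0 : circlePt x r θ ∉ Ω) (h1 : circlePt x r (θ + Real.pi / 3) ∉ Ω)
    (hm : 5 * Real.pi / 6 * r < maxArcMeasure Ω x r) :
    circlePt x r (θ + 7 * Real.pi / 6) ∈ Ω := by
  have hpi := Real.pi_pos
  have h2 : ENNReal.ofReal (5 * Real.pi / 6 * r)
      < ⨆ A ∈ {A | IsOpenArc x r A ∧ A ⊆ Ω}, μH[1] A := by
    by_contra hcon
    push Not at hcon
    have h := ENNReal.toReal_mono ENNReal.ofReal_ne_top hcon
    rw [ENNReal.toReal_ofReal (by positivity)] at h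
    exact absurd hm (not_lt.2 h)
  simp only [lt_iSup_iff] at h2
  obtain ⟨A, ⟨⟨c, d, hcd, -, rfl⟩, hA⟩, hlt⟩ := h2
  have h3 := hlt.trans_le (aux_arc_measure x r hr c d)
  rw [ENNReal.ofReal_lt_ofReal_iff (mul_pos hr (by linarith))] at h3
  have h4 : 5 * Real.pi / 6 < d - c := by
    by_contra hcon
    push Not at hcon
    nlinarith
  obtain ⟨k, ⟨hk1, hk2⟩, -⟩ := existsUnique_add_zsmul_mem_Ico
    (show (0:ℝ) < 2 * Real.pi by positivity) θ (c - 2 * Real.pi)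
  simp only [zsmul_eq_mul] at hk1 hk2
  have key : ∀ s, circlePt x r s ∉ Ω → ∀ m : ℤ, s + m * (2 * Real.pi) ∉ Set.Ioo c d := by
    intro s hs m hmem
    have := hA (Set.mem_image_of_mem _ hmem)
    rw [aux_circlePt_periodic] at this
    exact hs this
  -- the translate `θ + 2πk` lies in `[c - 2π, c)`
  have hd : d ≤ θ + k * (2 * Real.pi) + 2 * Real.pi := by
    by_contra hcon
    push Not at hcon
    rcases hk1.eq_or_lt with he | hl
    · have hk := key _ h1 (k + 1)
      push_cast at hk
      exact hk ⟨by linarith, by linarith⟩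
    · have hk := key _ h0 (k + 1)
      push_cast at hk
      exact hk ⟨by linarith, by linarith⟩
  have hc : θ + Real.pi / 3 + k * (2 * Real.pi) ≤ c := by
    by_contra hcon
    push Not at hcon
    exact key _ h1 k ⟨hcon, by linarith⟩
  have := hA (Set.mem_image_of_mem (circlePt x r)
    (show θ + 7 * Real.pi / 6 + k * (2 * Real.pi) ∈ Set.Ioo c d from
      ⟨by linarith, by linarith⟩))
  rwa [aux_circlePt_periodic] at this

theorem aux_angle (x p q : E2) (r : ℝ) (hr : 0 < r) (hp : dist p x = r) (hq : dist q x = r)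
    (hpq : dist p q = r) :
    ∃ θ, (circlePt x r θ = p ∧ circlePt x r (θ + Real.pi / 3) = q) ∨
      (circlePt x r θ = q ∧ circlePt x r (θ + Real.pi / 3) = p) := by
  obtain ⟨s, rfl⟩ := aux_param x p r hr hp
  obtain ⟨t, rfl⟩ := aux_param x q r hr hq
  have h := aux_dist_sq (circlePt x r s) (circlePt x r t)
  rw [hpq, aux_circlePt_zero, aux_circlePt_zero, aux_circlePt_one, aux_circlePt_one] at h
  have hs := Real.sin_sq_add_cos_sq s
  have ht := Real.sin_sq_add_cos_sq t
  have h2 : r ^ 2 * (2 * Real.cos (s - t) - 1) = 0 := by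
    rw [Real.cos_sub]
    linear_combination h + r ^ 2 * hs + r ^ 2 * ht
  have h3 : Real.cos (Real.pi / 3) = Real.cos (s - t) := by
    rw [Real.cos_pi_div_three]
    rcases mul_eq_zero.1 h2 with h | h
    · exact absurd h (by positivity)
    · linarith
  obtain ⟨k, hk | hk⟩ := Real.cos_eq_cos_iff.1 h3
  · refine ⟨t, Or.inr ⟨rfl, ?_⟩⟩
    rw [← aux_circlePt_periodic x r (t + Real.pi / 3) k]
    congr 1; linarith
  · refine ⟨s, Or.inl ⟨rfl, ?_⟩⟩
    rw [← aux_circlePt_periodic x r t k]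
    congr 1; linarith

theorem aux_main (Ω : Set E2) (hΩ : IsOpen Ω) (x p q : E2) (r : ℝ) (hr : 0 < r)
    (he : carlesonEps Ω x r < Real.pi / 6)
    (hp : dist p x = r) (hq : dist q x = r) (hpq : dist p q = r)
    (hpΓ : p ∈ frontier Ω) (hqΓ : q ∈ frontier Ω) : False := by
  have hn : ∀ z ∈ frontier Ω, z ∉ Ω ∧ z ∉ (closure Ω)ᶜ := fun z hz =>
    ⟨by rw [hΩ.frontier_eq] at hz; exact hz.2, fun h => h (frontier_subset_closure hz)⟩
  unfold carlesonEps at he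
  rw [one_div, inv_mul_lt_iff₀ hr, max_lt_iff, abs_lt, abs_lt] at he
  obtain ⟨⟨-, e1⟩, ⟨-, e2⟩⟩ := he
  have key : ∀ θ, circlePt x r θ ∈ frontier Ω → circlePt x r (θ + Real.pi / 3) ∈ frontier Ω →
      False := by
    intro θ h0 h1
    have a1 := aux_mem Ω x r θ hr (hn _ h0).1 (hn _ h1).1 (by linarith)
    have a2 := aux_mem (closure Ω)ᶜ x r θ hr (hn _ h0).2 (hn _ h1).2 (by linarith)
    exact a2 (subset_closure a1)
  obtain ⟨θ, ⟨h, h'⟩ | ⟨h, h'⟩⟩ := aux_angle x p q r hr hp hq hpq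
  · exact key θ (h ▸ hpΓ) (h' ▸ hqΓ)
  · exact key θ (h ▸ hqΓ) (h' ▸ hpΓ)

/-- The two intersection points of the circles `∂B(x₀,s₀)` and `∂B(y,s₀)`, for `x₀, y ∈ Γ`
at distance `s₀` with `s₀ < (π/(6C₀))^{1/α}`, do not lie on `Γ`. -/
theorem circle_intersections_off_boundary (Ωp : Set E2) (hΩ : IsJordanDomain Ωp)
    (Ωm : Set E2) (hΩm : Ωm = (closure Ωp)ᶜ)
    (Γ : Set E2) (hΓp : Γ = frontier Ωp) (hΓm : Γ = frontier Ωm)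
    (α C₀ : ℝ) (hα : α ∈ Set.Ioo (0 : ℝ) 1) (hC₀ : 0 < C₀)
    (r₀ : ℝ) (hr₀ : 0 < r₀)
    (hε : ∀ x ∈ Γ, ∀ r : ℝ, 0 < r → r ≤ r₀ → carlesonEps Ωp x r ≤ C₀ * r ^ α)
    (x₀ : E2) (hx₀ : x₀ ∈ Γ) (s₀ : ℝ) (hs₀ : 0 < s₀) (hs₀r : s₀ ≤ r₀)
    (hs₀small : s₀ < (Real.pi / (6 * C₀)) ^ (1 / α))
    (y : E2) (hy : y ∈ Metric.sphere x₀ s₀ ∩ Γ)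
    (a b : E2) (hab : a ≠ b)
    (ha : a ∈ Metric.sphere x₀ s₀ ∩ Metric.sphere y s₀)
    (hb : b ∈ Metric.sphere x₀ s₀ ∩ Metric.sphere y s₀) :
    a ∉ Γ ∧ b ∉ Γ := by
  have he : carlesonEps Ωp x₀ s₀ < Real.pi / 6 := by
    refine (hε x₀ hx₀ s₀ hs₀ hs₀r).trans_lt ?_
    have hpos : 0 < Real.pi / (6 * C₀) := by positivity
    have h := Real.rpow_lt_rpow hs₀.le hs₀small hα.1
    rw [← Real.rpow_mul hpos.le, one_div, inv_mul_cancel₀ hα.1.ne', Real.rpow_one,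
      lt_div_iff₀ (by positivity)] at h
    linarith
  subst hΓp
  have hdy : dist y x₀ = s₀ := hy.1
  refine ⟨fun h => ?_, fun h => ?_⟩
  · exact aux_main Ωp hΩ.1 x₀ a y s₀ hs₀ he ha.1 hdy ha.2 h hy.2
  · exact aux_main Ωp hΩ.1 x₀ b y s₀ hs₀ he hb.1 hdy hb.2 h hy.2

end
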